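/- Let X be a random vector on ℝ^d with law ν having finite first moment, Q = (Q₁,…,Q_d) a transport of the uniform measure on [0,1]^d onto ν, and α = (i₁,…,i_d) a multi-index of degree 2, i.e. i_j = 2 for exactly one index j and i_k = 1 for all k ≠ j. Let U = (U₁,…,U_d) be uniform on [0,1]^d and define the real random variable V = E[Q_i(U) | U_j] (the conditional expectation of the i-th component of Q over the coordinates other than U_j). Then |⟨λ_α, b_i⟩| ≤ λ₂(V), where λ_α = ∫_{[0,1]^d} Q(t) L_α(t) dt and λ₂(V) is the second univariate L-moment of V. -/

import Mathlib

open MeasureTheory Finset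

/-- The `r`-th shifted Legendre polynomial on `[0,1]` (`r ≥ 1`). -/
noncomputable def shiftedLegendre (r : ℕ) (t : ℝ) : ℝ :=
  ∑ k ∈ Finset.range r, (-1 : ℝ) ^ k * ((r - 1).choose k : ℝ) ^ 2 * t ^ (r - 1 - k) * (1 - t) ^ k

/-- The multivariate Legendre polynomial `L_α(t) = ∏_k L_{α_k}(t_k)`. -/
noncomputable def multiLegendre {d : ℕ} (α : Fin d → ℕ) (t : Fin d → ℝ) : ℝ :=
  ∏ k, shiftedLegendre (α k) (t k)

/-- The uniform probability measure on the cube `[0,1]^d`. -/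
noncomputable def unifCube (d : ℕ) : Measure (Fin d → ℝ) :=
  volume.restrict (Set.univ.pi fun _ => Set.Icc (0 : ℝ) 1)

/-!
For `α` of degree two, `L_α(t) = 2 t_j - 1`, so integrating out the other coordinates turns the
L-moment into `∫₀¹ g(s) (2 s - 1) ds`. The weight `2 s - 1 = ∫₀¹ sign (s - t) dt` is the marginal of
an antisymmetric kernel with values in `[-1, 1]`, so symmetrizing in `(s, t)` replaces `g(s)` by
`(g(s) - g(t)) / 2`, and taking absolute values gives `λ₂`.
-/

section AntisymmetricKernel

variable {α : Type*} [MeasurableSpace α] {μ : Measure α} [IsFiniteMeasure μ] {g : α → ℝ}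
  {K : α → α → ℝ} {C : ℝ}

theorem integral_mul_integral_eq_of_antisymm (hg : Integrable g μ)
    (hK : AEStronglyMeasurable (Function.uncurry K) (μ.prod μ)) (hKC : ∀ s t, |K s t| ≤ C)
    (hanti : ∀ s t, K t s = -K s t) :
    ∫ s, g s * ∫ t, K s t ∂μ ∂μ
      = 1 / 2 * ∫ p, (g p.1 - g p.2) * K p.1 p.2 ∂μ.prod μ := by
  have hbdd : ∀ᵐ p ∂μ.prod μ, ‖Function.uncurry K p‖ ≤ C := .of_forall fun p => hKC p.1 p.2
  have hfst : Integrable (fun p : α × α => g p.1 * K p.1 p.2) (μ.prod μ) :=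
    (hg.comp_fst μ).mul_bdd hK hbdd
  have hsnd : Integrable (fun p : α × α => g p.2 * K p.1 p.2) (μ.prod μ) :=
    (hg.comp_snd μ).mul_bdd hK hbdd
  have hfubini : ∫ s, g s * ∫ t, K s t ∂μ ∂μ = ∫ p, g p.1 * K p.1 p.2 ∂μ.prod μ := by
    simp only [integral_prod _ hfst, integral_const_mul]
  have hswap : ∫ p, g p.2 * K p.1 p.2 ∂μ.prod μ = -∫ p, g p.1 * K p.1 p.2 ∂μ.prod μ := by
    rw [← integral_prod_swap, ← integral_neg]
    congr 1 with p
    rw [Prod.fst_swap, Prod.snd_swap, hanti, mul_neg]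
  simp only [sub_mul]
  rw [integral_sub hfst hsnd, hswap, hfubini]
  ring

theorem abs_integral_mul_integral_le_of_antisymm (hg : Integrable g μ)
    (hK : AEStronglyMeasurable (Function.uncurry K) (μ.prod μ)) (hKC : ∀ s t, |K s t| ≤ C)
    (hanti : ∀ s t, K t s = -K s t) :
    |∫ s, g s * ∫ t, K s t ∂μ ∂μ| ≤ C / 2 * ∫ s, ∫ t, |g s - g t| ∂μ ∂μ := by
  have hdiff : Integrable (fun p : α × α => |g p.1 - g p.2|) (μ.prod μ) :=
    ((hg.comp_fst μ).sub (hg.comp_snd μ)).abs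
  have hle : |∫ p, (g p.1 - g p.2) * K p.1 p.2 ∂μ.prod μ|
      ≤ ∫ p, |g p.1 - g p.2| * C ∂μ.prod μ := by
    rw [← Real.norm_eq_abs]
    refine norm_integral_le_of_norm_le (hdiff.mul_const C) (.of_forall fun p => ?_)
    rw [Real.norm_eq_abs, abs_mul]
    exact mul_le_mul_of_nonneg_left (hKC p.1 p.2) (abs_nonneg _)
  rw [integral_mul_const, integral_prod _ hdiff] at hle
  rw [integral_mul_integral_eq_of_antisymm hg hK hKC hanti, abs_mul, abs_of_pos one_half_pos]
  linarith

end AntisymmetricKernel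

section SignKernel

theorem measurable_realSign : Measurable Real.sign :=
  measurable_const.ite measurableSet_Iio
    (measurable_const.ite measurableSet_Ioi measurable_const)

theorem abs_realSign_le_one (r : ℝ) : |Real.sign r| ≤ 1 := by
  rcases Real.sign_apply_eq r with h | h | h <;> simp [h]

theorem integral_realSign_sub (μ : Measure ℝ) [IsFiniteMeasure μ] (s : ℝ) :
    ∫ t, Real.sign (s - t) ∂μ = μ.real (Set.Iio s) - μ.real (Set.Ioi s) := by
  have hind : (fun t => Real.sign (s - t))
      = fun t => (Set.Iio s).indicator 1 t - (Set.Ioi s).indicator 1 t := by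
    funext t
    rcases lt_trichotomy t s with h | rfl | h
    · simp [Real.sign_of_pos (sub_pos.2 h), h, h.le]
    · simp
    · simp [Real.sign_of_neg (sub_neg.2 h), h, h.le]
  rw [hind, integral_sub ((integrable_const 1).indicator measurableSet_Iio)
    ((integrable_const 1).indicator measurableSet_Ioi), integral_indicator_one measurableSet_Iio,
    integral_indicator_one measurableSet_Ioi]

theorem abs_integral_mul_measureReal_Iio_sub_Ioi_le {μ : Measure ℝ} [IsFiniteMeasure μ] {g : ℝ → ℝ}
    (hg : Integrable g μ) :
    |∫ s, g s * (μ.real (Set.Iio s) - μ.real (Set.Ioi s)) ∂μ|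
      ≤ 1 / 2 * ∫ s, ∫ t, |g s - g t| ∂μ ∂μ := by
  simp only [← integral_realSign_sub μ]
  refine abs_integral_mul_integral_le_of_antisymm hg ?_ (fun s t => abs_realSign_le_one (s - t))
    fun s t => ?_
  · exact (measurable_realSign.comp (measurable_fst.sub measurable_snd)).aestronglyMeasurable
  · rw [← Real.sign_neg, neg_sub]

end SignKernel

section ProductMeasure

variable {ι : Type*} [Fintype ι] [DecidableEq ι] {X : ι → Type*} [∀ k, MeasurableSpace (X k)]
  (μ : ∀ k, Measure (X k)) [∀ k, SigmaFinite (μ k)] (j : ι) [IsProbabilityMeasure (μ j)]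

theorem measurePreserving_update_pi :
    MeasurePreserving (fun p : X j × (∀ k, X k) => Function.update p.2 j p.1)
      ((μ j).prod (Measure.pi μ)) (Measure.pi μ) := by
  have hmeas : Measurable fun p : X j × (∀ k, X k) => Function.update p.2 j p.1 :=
    measurable_update'.comp measurable_swap
  refine ⟨hmeas, (Measure.pi_eq fun S hS => ?_).symm⟩
  have hpre : (fun p : X j × (∀ k, X k) => Function.update p.2 j p.1) ⁻¹' Set.univ.pi S
      = S j ×ˢ Set.univ.pi (Function.update S j Set.univ) := by
    ext p
    simp [Function.forall_update_iff p.2 fun k x => x ∈ S k,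
      Function.forall_update_iff S fun k A => p.2 k ∈ A]
  rw [Measure.map_apply hmeas (MeasurableSet.univ_pi hS), hpre, Measure.prod_prod, Measure.pi_pi,
    ← mul_prod_erase univ _ (mem_univ j), Function.update_self, measure_univ, one_mul,
    ← mul_prod_erase univ _ (mem_univ j)]
  congr 1
  refine prod_congr rfl fun k hk => ?_
  rw [Function.update_of_ne (ne_of_mem_erase hk)]

variable {μ} {E : Type*} [NormedAddCommGroup E] [NormedSpace ℝ E]

theorem integrable_integral_update_pi {f : (∀ k, X k) → E}
    (hf : Integrable f (Measure.pi μ)) :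
    Integrable (fun s => ∫ t, f (Function.update t j s) ∂Measure.pi μ) (μ j) :=
  ((measurePreserving_update_pi μ j).integrable_comp_of_integrable hf).integral_prod_left

theorem integral_pi_eq_integral_integral_update {f : (∀ k, X k) → E}
    (hf : Integrable f (Measure.pi μ)) :
    ∫ t, f t ∂Measure.pi μ
      = ∫ s, ∫ t, f (Function.update t j s) ∂Measure.pi μ ∂μ j := by
  have hupd := measurePreserving_update_pi μ j
  calc
    ∫ t, f t ∂Measure.pi μ
        = ∫ p, f (Function.update p.2 j p.1) ∂(μ j).prod (Measure.pi μ) := by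
      rw [← hupd.map_eq] at hf
      rw [← integral_map hupd.aemeasurable hf.aestronglyMeasurable, hupd.map_eq]
    _ = ∫ s, ∫ t, f (Function.update t j s) ∂Measure.pi μ ∂μ j :=
      integral_prod _ (hupd.integrable_comp_of_integrable hf)

variable {j}

theorem integral_pi_mul_comp_eval {𝕜 : Type*} [RCLike 𝕜] {f : (∀ k, X k) → 𝕜}
    {h : X j → 𝕜} (hfh : Integrable (fun t => f t * h (t j)) (Measure.pi μ)) :
    ∫ t, f t * h (t j) ∂Measure.pi μ
      = ∫ s, (∫ t, f (Function.update t j s) ∂Measure.pi μ) * h s ∂μ j := by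
  simp only [integral_pi_eq_integral_integral_update j hfh, Function.update_self,
    integral_mul_const]

end ProductMeasure

theorem integrable_apply_of_integrable_norm_map {Ω ι : Type*} [MeasurableSpace Ω] [Fintype ι]
    {μ : Measure Ω} {Q : Ω → ι → ℝ} (hQ : AEMeasurable Q μ)
    (hmom : Integrable (fun x => ‖x‖) (μ.map Q)) (i : ι) :
    Integrable (fun t => Q t i) μ :=
  have hid : Integrable id (μ.map Q) := (integrable_norm_iff aestronglyMeasurable_id).1 hmom
  (hid.comp_aemeasurable hQ).eval i

theorem shiftedLegendre_one (t : ℝ) : shiftedLegendre 1 t = 1 := by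
  simp [shiftedLegendre]

theorem shiftedLegendre_two (t : ℝ) : shiftedLegendre 2 t = 2 * t - 1 := by
  simp only [shiftedLegendre, sum_range_succ, sum_range_zero, Nat.add_one_sub_one,
    Nat.choose_zero_right, Nat.choose_self, Nat.cast_one]
  ring

theorem multiLegendre_eq_shiftedLegendre {d : ℕ} {α : Fin d → ℕ} {j : Fin d}
    (hα : ∀ k, k ≠ j → α k = 1) (t : Fin d → ℝ) :
    multiLegendre α t = shiftedLegendre (α j) (t j) :=
  prod_eq_single_of_mem j (mem_univ j) fun k _ hk => by rw [hα k hk, shiftedLegendre_one]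

/-- The uniform probability measure on `[0,1]`, the common law of the coordinates of a uniform
vector on the cube. Reducible, so that integrals against it are set integrals over `[0,1]`. -/
noncomputable abbrev unifInterval : Measure ℝ := volume.restrict (Set.Icc 0 1)

instance : IsProbabilityMeasure unifInterval := ⟨by simp⟩

theorem unifCube_eq_pi (d : ℕ) : unifCube d = Measure.pi fun _ => unifInterval := by
  rw [unifCube, volume_pi, Measure.restrict_pi_pi]

theorem unifInterval_real_Iio_sub_Ioi {s : ℝ} (hs : s ∈ Set.Icc (0 : ℝ) 1) :
    unifInterval.real (Set.Iio s) - unifInterval.real (Set.Ioi s) = 2 * s - 1 := by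
  have hIio : Set.Iio s ∩ Set.Icc 0 1 = Set.Ico 0 s := by grind
  have hIoi : Set.Ioi s ∩ Set.Icc 0 1 = Set.Ioc s 1 := by grind
  rw [measureReal_restrict_apply measurableSet_Iio, measureReal_restrict_apply measurableSet_Ioi,
    hIio, hIoi, Real.volume_real_Ico_of_le hs.1, Real.volume_real_Ioc_of_le hs.2]
  ring

theorem abs_integral_mul_two_mul_sub_one_le {g : ℝ → ℝ} (hg : Integrable g unifInterval) :
    |∫ s, g s * (2 * s - 1) ∂unifInterval|
      ≤ 1 / 2 * ∫ s, ∫ t, |g s - g t| ∂unifInterval ∂unifInterval := by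
  have hweight : ∫ s, g s * (2 * s - 1) ∂unifInterval
      = ∫ s, g s * (unifInterval.real (Set.Iio s) - unifInterval.real (Set.Ioi s)) ∂unifInterval :=
    setIntegral_congr_fun measurableSet_Icc fun s hs => by
      simp only [unifInterval_real_Iio_sub_Ioi hs]
  rw [hweight]
  exact abs_integral_mul_measureReal_Iio_sub_Ioi_le hg

theorem integrable_mul_two_mul_sub_one {d : ℕ} {f : (Fin d → ℝ) → ℝ}
    (hf : Integrable f (unifCube d)) (j : Fin d) :
    Integrable (fun t => f t * (2 * t j - 1)) (unifCube d) := by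
  have hcube : MeasurableSet (Set.univ.pi fun _ : Fin d => Set.Icc (0 : ℝ) 1) :=
    .univ_pi fun _ => measurableSet_Icc
  refine hf.mul_bdd (c := 1) (Measurable.aestronglyMeasurable (by fun_prop))
    (ae_restrict_of_forall_mem hcube fun t ht => ?_)
  rw [Real.norm_eq_abs, abs_le]
  obtain ⟨h0, h1⟩ := ht j (Set.mem_univ j)
  constructor <;> linarith

theorem abs_lmoment_degree_two_le_general {d : ℕ} {f : (Fin d → ℝ) → ℝ}
    (hf : Integrable f (unifCube d)) {α : Fin d → ℕ} {j : Fin d}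
    (hαj : α j = 2) (hαk : ∀ k, k ≠ j → α k = 1)
    {g : ℝ → ℝ} (hg : ∀ s : ℝ, g s = ∫ t, f (Function.update t j s) ∂(unifCube d)) :
    |∫ t, f t * multiLegendre α t ∂(unifCube d)|
      ≤ (1 / 2) * ∫ s in Set.Icc (0 : ℝ) 1, ∫ s' in Set.Icc (0 : ℝ) 1, |g s - g s'| := by
  obtain rfl : g = fun s => ∫ t, f (Function.update t j s) ∂(unifCube d) := funext hg
  have hprod := integrable_mul_two_mul_sub_one hf j
  simp only [multiLegendre_eq_shiftedLegendre hαk, hαj, shiftedLegendre_two]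
  rw [unifCube_eq_pi] at hf hprod ⊢
  rw [integral_pi_mul_comp_eval (h := fun s => 2 * s - 1) hprod]
  exact abs_integral_mul_two_mul_sub_one_le (integrable_integral_update_pi j hf)

/-- For a transport `Q` of the uniform measure on `[0,1]^d` onto the law `ν` of
a random vector `X` with finite first moment, and a multi-index `α` of degree 2
(`α_j = 2` for exactly one `j`, `α_k = 1` otherwise), the `i`-th coordinate of
the L-moment `λ_α` satisfies `|⟨λ_α, b_i⟩| ≤ λ₂(V)` where
`V = E[Q_i(U) | U_j]` (as a function `g` of the `j`-th coordinate of the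
uniform vector `U`) and `λ₂(V) = ½ E[|V − V'|]` is its second univariate
L-moment. -/
theorem abs_lmoment_degree_two_le {d : ℕ}
    (ν : Measure (Fin d → ℝ)) [IsProbabilityMeasure ν]
    (hmom : Integrable (fun x => ‖x‖) ν)
    (Q : (Fin d → ℝ) → (Fin d → ℝ)) (hQmeas : Measurable Q)
    (hQmap : Measure.map Q (unifCube d) = ν)
    (α : Fin d → ℕ) (i j : Fin d)
    (hαj : α j = 2) (hαk : ∀ k, k ≠ j → α k = 1)
    (g : ℝ → ℝ)
    (hg : ∀ s : ℝ, g s = ∫ t, Q (Function.update t j s) i ∂(unifCube d)) :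
    |∫ t, Q t i * multiLegendre α t ∂(unifCube d)|
      ≤ (1 / 2) * ∫ s in Set.Icc (0 : ℝ) 1, ∫ s' in Set.Icc (0 : ℝ) 1, |g s - g s'| :=
  abs_lmoment_degree_two_le_general
    (integrable_apply_of_integrable_norm_map hQmeas.aemeasurable (hQmap ▸ hmom) i) hαj hαk hg
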